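/- There exists a 2-(24,4,1) packing with 42 blocks whose leave is a vertex-disjoint union of five cycles of length 3 and one cycle of length 9, covering all 24 points (leave type 3^5 9^1). -/

import Mathlib

/-!
The packing is given explicitly: its blocks are listed in `blockList`, and the leave consists of the
triangles `{3i, 3i+1, 3i+2}` for `i < 5` and the 9-cycle `15, 16, …, 23`. It is
invariant under the fixed-point-free permutation of order 3 that permutes the first three triangles
cyclically by `j ↦ j + 3` modulo 9, rotates each of the other two triangles, and rotates the 9-cycle by three
steps; the 42 blocks form 14 orbits, one on each line of `blockList`.

Everything follows from one finite computation, `length_blocksThrough`: a pair of distinct points lies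
in no listed block if it is an edge of one of the six cycles, and in exactly one otherwise. The blocks
are kept as lists of natural numbers so that this computation is cheap for the kernel.
-/

/-- A 2-(24,4,1) packing: a collection of 4-element blocks on 24 points such that
every pair of distinct points lies in at most one block. -/
def IsPacking (B : Finset (Finset (Fin 24))) : Prop :=
  (∀ b ∈ B, b.card = 4) ∧
  ∀ p q : Fin 24, p ≠ q → ∀ b₁ ∈ B, ∀ b₂ ∈ B,
    p ∈ b₁ → q ∈ b₁ → p ∈ b₂ → q ∈ b₂ → b₁ = b₂

/-- Adjacency in the leave of a packing: the pair of distinct points is covered by no block. -/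
def LeaveAdj (B : Finset (Finset (Fin 24))) (p q : Fin 24) : Prop :=
  p ≠ q ∧ ∀ b ∈ B, ¬ (p ∈ b ∧ q ∈ b)

/-- The leave of the packing `B` is a vertex-disjoint union of cycles whose lengths are
given by the list `L`, covering all 24 points. -/
def LeaveIsCycleType (B : Finset (Finset (Fin 24))) (L : List ℕ) : Prop :=
  ∃ f : (i : Fin L.length) → ZMod (L.get i) → Fin 24,
    Function.Bijective (fun x : Σ i : Fin L.length, ZMod (L.get i) => f x.1 x.2) ∧
    ∀ p q : Fin 24, LeaveAdj B p q ↔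
      ∃ i k, (p = f i k ∧ q = f i (k + 1)) ∨ (q = f i k ∧ p = f i (k + 1))

/-- The blocks, as lists of points. Each line is an orbit of the order 3 symmetry. -/
def blockList : List (List ℕ) :=
  [[1, 9, 19, 23], [4, 10, 17, 22], [7, 11, 16, 20],
   [1, 10, 15, 21], [4, 11, 15, 18], [7, 9, 18, 21],
   [1, 4, 14, 16], [4, 7, 12, 19], [1, 7, 13, 22],
   [0, 3, 7, 15], [1, 3, 6, 18], [0, 4, 6, 21],
   [0, 8, 19, 22], [2, 3, 16, 22], [5, 6, 16, 19],
   [1, 8, 17, 20], [2, 4, 20, 23], [5, 7, 17, 23],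
   [0, 9, 12, 16], [3, 10, 13, 19], [6, 11, 14, 22],
   [1, 5, 11, 12], [4, 8, 9, 13], [2, 7, 10, 14],
   [2, 5, 13, 18], [5, 8, 14, 21], [2, 8, 12, 15],
   [0, 5, 10, 20], [3, 8, 11, 23], [2, 6, 9, 17],
   [2, 11, 19, 21], [5, 9, 15, 22], [8, 10, 16, 18],
   [12, 18, 20, 22], [13, 16, 21, 23], [14, 15, 17, 19],
   [0, 14, 18, 23], [3, 12, 17, 21], [6, 13, 15, 20],
   [0, 11, 13, 17], [3, 9, 14, 20], [6, 10, 12, 23]]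

/-- The subset of `Fin 24` whose elements have their values in the list `l`. -/
def toBlock (l : List ℕ) : Finset (Fin 24) :=
  Finset.univ.filter fun p => p.val ∈ l

theorem mem_toBlock {l : List ℕ} {p : Fin 24} : p ∈ toBlock l ↔ p.val ∈ l := by
  simp [toBlock]

/-- The packing formed by the listed blocks. -/
def blocks : Finset (Finset (Fin 24)) :=
  (blockList.map toBlock).toFinset

theorem mem_blocks {b : Finset (Fin 24)} : b ∈ blocks ↔ ∃ l ∈ blockList, toBlock l = b := by
  simp [blocks]

/-- The successor of a point on its leave cycle. -/
def next (p : ℕ) : ℕ :=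
  if p < 15 then (if p % 3 = 2 then p - 2 else p + 1) else (if p = 23 then 15 else p + 1)

/-- The listed blocks containing both `p` and `q`. -/
def blocksThrough (p q : ℕ) : List (List ℕ) :=
  blockList.filter fun l => l.contains p && l.contains q

theorem mem_blocksThrough {p q : ℕ} {l : List ℕ} :
    l ∈ blocksThrough p q ↔ l ∈ blockList ∧ p ∈ l ∧ q ∈ l := by
  simp [blocksThrough]

theorem length_blocksThrough : ∀ p < 24, ∀ q < 24, p ≠ q →
    (blocksThrough p q).length = if q = next p ∨ p = next q then 0 else 1 := by
  decide +kernel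

theorem next_ne_self : ∀ p < 24, next p ≠ p := by
  decide +kernel

theorem card_toBlock : ∀ l ∈ blockList, (toBlock l).card = 4 := by
  decide +kernel

theorem eq_of_two_common_points {p q : Fin 24} (hpq : p ≠ q) {l₁ l₂ : List ℕ}
    (h₁ : l₁ ∈ blockList) (h₂ : l₂ ∈ blockList) (hp₁ : p ∈ toBlock l₁) (hq₁ : q ∈ toBlock l₁)
    (hp₂ : p ∈ toBlock l₂) (hq₂ : q ∈ toBlock l₂) : l₁ = l₂ := by
  rw [mem_toBlock] at hp₁ hq₁ hp₂ hq₂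
  have m₁ := mem_blocksThrough.mpr ⟨h₁, hp₁, hq₁⟩
  have m₂ := mem_blocksThrough.mpr ⟨h₂, hp₂, hq₂⟩
  have hlen := length_blocksThrough p p.isLt q q.isLt (Fin.val_ne_of_ne hpq)
  split_ifs at hlen
  · rw [List.eq_nil_of_length_eq_zero hlen] at m₁
    simp at m₁
  · obtain ⟨l, hl⟩ := List.length_eq_one_iff.mp hlen
    rw [hl, List.mem_singleton] at m₁ m₂
    rw [m₁, m₂]

theorem isPacking_blocks : IsPacking blocks := by
  constructor
  · intro b hb
    obtain ⟨l, hl, rfl⟩ := mem_blocks.mp hb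
    exact card_toBlock l hl
  · intro p q hpq b₁ hb₁ b₂ hb₂ hp₁ hq₁ hp₂ hq₂
    obtain ⟨l₁, h₁, rfl⟩ := mem_blocks.mp hb₁
    obtain ⟨l₂, h₂, rfl⟩ := mem_blocks.mp hb₂
    rw [eq_of_two_common_points hpq h₁ h₂ hp₁ hq₁ hp₂ hq₂]

theorem card_blocks : blocks.card = 42 := by
  have hnodup : (blockList.map toBlock).Nodup := by
    refine List.Nodup.map_on ?_ (by decide +kernel)
    -- Equal blocks share two points, hence come from the same list.
    intro l₁ h₁ l₂ h₂ heq
    have hcard : 1 < (toBlock l₁).card := by rw [card_toBlock l₁ h₁]; norm_num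
    obtain ⟨p, hp, q, hq, hpq⟩ := Finset.one_lt_card.mp hcard
    exact eq_of_two_common_points hpq h₁ h₂ hp hq (heq ▸ hp) (heq ▸ hq)
  rw [blocks, List.toFinset_card_of_nodup hnodup, List.length_map]
  rfl

theorem leaveAdj_blocks_iff (p q : Fin 24) :
    LeaveAdj blocks p q ↔ q.val = next p ∨ p.val = next q := by
  have huncovered : (∀ b ∈ blocks, ¬ (p ∈ b ∧ q ∈ b)) ↔ blocksThrough p q = [] := by
    rw [List.eq_nil_iff_forall_not_mem]
    constructor
    · intro h l hl
      obtain ⟨hl, hp, hq⟩ := mem_blocksThrough.mp hl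
      exact h _ (mem_blocks.mpr ⟨l, hl, rfl⟩) ⟨mem_toBlock.mpr hp, mem_toBlock.mpr hq⟩
    · rintro h b hb ⟨hp, hq⟩
      obtain ⟨l, hl, rfl⟩ := mem_blocks.mp hb
      exact h l (mem_blocksThrough.mpr ⟨hl, mem_toBlock.mp hp, mem_toBlock.mp hq⟩)
  rw [LeaveAdj, huncovered, ← List.length_eq_zero_iff]
  constructor
  · rintro ⟨hpq, h⟩
    rw [length_blocksThrough p p.isLt q q.isLt (Fin.val_ne_of_ne hpq)] at h
    by_contra hn
    simp [hn] at h
  · intro h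
    have hpq : p ≠ q := by
      rintro rfl
      exact next_ne_self p p.isLt (by tauto)
    refine ⟨hpq, ?_⟩
    rw [length_blocksThrough p p.isLt q q.isLt (Fin.val_ne_of_ne hpq), if_pos h]

/-- The cycle lengths are nonzero, so the index set `ZMod` of each cycle is finite. -/
instance neZero_cycleLength (i : Fin [3, 3, 3, 3, 3, 9].length) :
    NeZero ([3, 3, 3, 3, 3, 9].get i) :=
  ⟨by revert i; decide⟩

/-- The `k`-th vertex of the `i`-th leave cycle. The cycles occupy consecutive intervals, so the
`i`-th one starts at `3 * i`, also for the 9-cycle, which is `i = 5`. -/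
def leaveVertex (i : Fin [3, 3, 3, 3, 3, 9].length) (k : ZMod ([3, 3, 3, 3, 3, 9].get i)) :
    Fin 24 :=
  Fin.ofNat 24 (3 * i.val + k.val)

theorem bijective_leaveVertex :
    Function.Bijective (fun x : Σ i : Fin [3, 3, 3, 3, 3, 9].length,
      ZMod ([3, 3, 3, 3, 3, 9].get i) => leaveVertex x.1 x.2) := by
  decide +kernel

theorem leaveVertex_add_one : ∀ i k, (leaveVertex i (k + 1)).val = next (leaveVertex i k) := by
  decide +kernel

theorem exists_leaveVertex_iff (p q : Fin 24) :
    (∃ i k, p = leaveVertex i k ∧ q = leaveVertex i (k + 1)) ↔ q.val = next p := by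
  constructor
  · rintro ⟨i, k, rfl, rfl⟩
    exact leaveVertex_add_one i k
  · intro h
    obtain ⟨⟨i, k⟩, rfl⟩ := bijective_leaveVertex.surjective p
    exact ⟨i, k, rfl, Fin.ext (h.trans (leaveVertex_add_one i k).symm)⟩

theorem leaveIsCycleType_blocks : LeaveIsCycleType blocks [3, 3, 3, 3, 3, 9] := by
  refine ⟨leaveVertex, bijective_leaveVertex, fun p q => ?_⟩
  rw [leaveAdj_blocks_iff, ← exists_leaveVertex_iff p q, ← exists_leaveVertex_iff q p]
  simp only [exists_or]

/-- There is a 2-(24,4,1) packing with 42 blocks whose leave is a vertex-disjoint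
union of cycles of lengths [3, 3, 3, 3, 3, 9], covering all 24 points. -/
theorem exists_max_packing_with_leave_type :
    ∃ B : Finset (Finset (Fin 24)), IsPacking B ∧ B.card = 42 ∧
      LeaveIsCycleType B [3, 3, 3, 3, 3, 9] :=
  ⟨blocks, isPacking_blocks, card_blocks, leaveIsCycleType_blocks⟩
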